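/- For every u ∈ C_0^∞(ℝ³;ℝ³) with spherical-mean decomposition u = ū + v, the bilinear form B*(u,u) := (α/2)∫(v_j ∂_k v_k − v_k ∂_k v_j)∂_iΦ_ij dx + ∫(∂_k u_i ∂_k u_j + α ∂_k u_k ∂_i u_j)Φ_ij dx equals c_α ∫_{ℝ³} { (α/(α+2)) r^{−2} [ v_k (∂_k v)·ω − (div v)(v·ω) ] + r^{−1} [ |D_r ū|² + α((2α+3)/(α+2)) Σ_i (D_r ū_i)² ω_i² + |Dv|² + α (div v)² + (α/(α+2)) Σ_k |(∂_k v)·ω|² + (α²/(α+2)) (div v)(ω_i (∂_i v)·ω) + α((3α+4)/(α+2)) (D_r ū·ω)(div v) + α (D_r ū·ω)(ω_i (∂_i v)·ω) ] } dx, with summation over repeated indices. -/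

import Mathlib

open MeasureTheory Metric Real Filter

noncomputable section

/-- `ℝ³` as Euclidean space. -/
abbrev E3 : Type := EuclideanSpace ℝ (Fin 3)

/-- Partial derivative `∂ᵢ f` on `ℝ³`. -/
def pd (i : Fin 3) (f : E3 → ℝ) (x : E3) : ℝ :=
  fderiv ℝ f x (EuclideanSpace.single i 1)

/-- Laplacian on `ℝ³`. -/
def lap (f : E3 → ℝ) (x : E3) : ℝ := ∑ i, pd i (pd i f) x

/-- Divergence of a vector field on `ℝ³`. -/
def divg (u : E3 → Fin 3 → ℝ) (x : E3) : ℝ := ∑ k, pd k (fun y => u y k) x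

/-- The 3D Lamé operator `(Lu)ᵢ = -Δuᵢ - α ∂ᵢ (div u)`. -/
def lame (α : ℝ) (u : E3 → Fin 3 → ℝ) (x : E3) (i : Fin 3) : ℝ :=
  - lap (fun y => u y i) x - α * pd i (divg u) x

/-- The constant `c_α = (α+2)/(8π(α+1))`. -/
def cA (α : ℝ) : ℝ := (α + 2) / (8 * Real.pi * (α + 1))

/-- The fundamental matrix `Φ` of the 3D Lamé system:
`Φ_ij(x) = c_α |x|⁻¹ (δ_ij + (α/(α+2)) xᵢxⱼ/|x|²)`. -/
def Phi (α : ℝ) (x : E3) (i j : Fin 3) : ℝ :=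
  cA α * ‖x‖⁻¹ * ((if i = j then (1 : ℝ) else 0) + (α / (α + 2)) * (x i * x j) / ‖x‖ ^ 2)

/-- `u ∈ C₀^∞(U; ℝ³)`: smooth, compactly supported, with support inside `U`. -/
def IsTestOn (U : Set E3) (u : E3 → Fin 3 → ℝ) : Prop :=
  ContDiff ℝ (⊤ : ℕ∞) u ∧ HasCompactSupport u ∧ tsupport u ⊆ U

/-- `∫_{ℝ³} (Lu)·(Φ(·-y) u) dx`. -/
def lameEnergy (α : ℝ) (u : E3 → Fin 3 → ℝ) (y : E3) : ℝ :=
  ∫ x : E3, ∑ i, ∑ j, lame α u x i * Phi α (x - y) i j * u x j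

/-- The surface measure on the unit sphere `S² ⊂ ℝ³` (total mass `4π`). -/
def sphMeas : Measure (sphere (0 : E3) 1) := volume.toSphere

/-- `∫_{S²} f(rω) dσ(ω)`. -/
def sphInt (f : E3 → ℝ) (r : ℝ) : ℝ := ∫ ω : sphere (0 : E3) 1, f (r • (ω : E3)) ∂sphMeas

/-- `(ū, v)` is the spherical-mean decomposition of `u`:
`ūᵢ(r) = (1/(4π)) ∫_{S²} uᵢ(rω) dσ(ω)` and `uᵢ(x) = ūᵢ(|x|) + vᵢ(x)`. -/
def IsSphericalMeanDecomp (u : E3 → Fin 3 → ℝ) (ub : Fin 3 → ℝ → ℝ)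
    (v : E3 → Fin 3 → ℝ) : Prop :=
  (∀ i r, ub i r = (1 / (4 * Real.pi)) * sphInt (fun x => u x i) r) ∧
  (∀ x i, u x i = ub i ‖x‖ + v x i)


/-!
By `∂ᵢΦᵢⱼ = c_α (α / (α + 2) - 1) r⁻² ωⱼ`, the first integral is already the `r⁻²` part of the
formula. In the second one the Jacobian of `u` is that of `v` plus the rank-one matrix
`ω ⊗ D_r ū`, and expanding the quadratic integrand pointwise leaves two quantities that are not in
the formula. The first, `r⁻¹ (D_r ū)ᵢ (D_r v)ᵢ`, integrates to zero over every sphere because the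
spherical means of `v`, and hence those of `D_r v`, vanish. The second is the off-diagonal part of
`(D_r ū · ω)²`, which integrates to zero by the reflections `xᵢ ↦ -xᵢ`.
-/

open scoped ENNReal

section WeightedIntegrability

lemma integrable_mul_of_memLp_top {X : Type*} [TopologicalSpace X] [MeasurableSpace X]
    [OpensMeasurableSpace X] {μ : Measure X} {w f : X → ℝ} (hw : LocallyIntegrable w μ)
    (hf : MemLp f ∞ μ) (hfc : HasCompactSupport f) : Integrable (fun x ↦ w x * f x) μ := by
  have hsupp : Function.support (fun x ↦ w x * f x) ⊆ tsupport f :=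
    (Function.support_mul_subset_right w f).trans (subset_tsupport f)
  rw [← integrableOn_iff_integrable_of_support_subset hsupp]
  exact (hw.integrableOn_isCompact hfc.isCompact).mul_of_top_left (hf.restrict _)

variable {E : Type*} [NormedAddCommGroup E] [NormedSpace ℝ E] [MeasurableSpace E] [BorelSpace E]
  {μ : Measure E}

lemma memLp_top_apply_div_norm (ℓ : E →L[ℝ] ℝ) : MemLp (fun x ↦ ℓ x / ‖x‖) ∞ μ := by
  refine memLp_top_of_bound (Measurable.aestronglyMeasurable (by fun_prop)) ‖ℓ‖
    (.of_forall fun x ↦ ?_)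
  rw [norm_div, norm_norm]
  exact div_le_of_le_mul₀ (norm_nonneg x) (norm_nonneg ℓ) (ℓ.le_opNorm x)

variable [FiniteDimensional ℝ E] [μ.IsAddHaarMeasure] {n : ℕ}

lemma locallyIntegrable_inv_norm_pow (hn : n < Module.finrank ℝ E) :
    LocallyIntegrable (fun x : E ↦ (‖x‖ ^ n)⁻¹) μ := by
  refine locallyIntegrable_of_norm_le_rpow (C := 1) (α := n) (by lia) (by exact_mod_cast hn)
    (.of_forall fun x ↦ ?_) (by fun_prop)
  rw [one_mul, norm_inv, norm_pow, norm_norm, Real.rpow_neg (norm_nonneg x), Real.rpow_natCast]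

lemma integrable_inv_norm_pow_mul (hn : n < Module.finrank ℝ E) {f : E → ℝ}
    (hf : MemLp f ∞ μ) (hfc : HasCompactSupport f) :
    Integrable (fun x ↦ (‖x‖ ^ n)⁻¹ * f x) μ :=
  integrable_mul_of_memLp_top (locallyIntegrable_inv_norm_pow hn) hf hfc

end WeightedIntegrability

section PolarCoordinates

variable {E F : Type*} [NormedAddCommGroup E] [NormedSpace ℝ E] [FiniteDimensional ℝ E]
  [Nontrivial E] [MeasurableSpace E] [BorelSpace E] [NormedAddCommGroup F] [NormedSpace ℝ F]
  {μ : Measure E} [μ.IsAddHaarMeasure]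

lemma integral_eq_integral_integral_sphere {f : E → F} (hf : Integrable f μ) :
    ∫ x, f x ∂μ = ∫ r : Set.Ioi (0 : ℝ), ∫ ω : sphere (0 : E) 1, f ((r : ℝ) • (ω : E)) ∂μ.toSphere
      ∂Measure.volumeIoiPow (Module.finrank ℝ E - 1) := by
  let e := homeomorphUnitSphereProd E
  let g : sphere (0 : E) 1 × Set.Ioi (0 : ℝ) → F := fun p ↦ f ((p.2 : ℝ) • (p.1 : E))
  have he : MeasurableEmbedding e := e.measurableEmbedding
  have hmp := μ.measurePreserving_homeomorphUnitSphereProd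
  have hge : g ∘ e = f ∘ Subtype.val := by
    funext x
    simp [g, e, smul_smul, norm_ne_zero_iff.2 x.2]
  have hg : Integrable g (μ.toSphere.prod (.volumeIoiPow (Module.finrank ℝ E - 1))) := by
    rw [← hmp.integrable_comp_emb he, hge,
      ← integrableOn_iff_comap_subtypeVal (measurableSet_singleton _).compl]
    exact hf.integrableOn
  calc ∫ x, f x ∂μ = ∫ x : ({0}ᶜ : Set E), (g ∘ e) x ∂μ.comap (↑) := by
        simp_rw [hge, Function.comp_apply]
        rw [integral_subtype_comap (measurableSet_singleton _).compl f, restrict_compl_singleton]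
    _ = ∫ p, g p ∂μ.toSphere.prod (.volumeIoiPow (Module.finrank ℝ E - 1)) :=
        hmp.integral_comp he g
    _ = _ := integral_prod_symm g hg

end PolarCoordinates

section SphericalMean

variable {E F : Type*} [NormedAddCommGroup E] [NormedAddCommGroup F]

lemma hasCompactSupport_comp_norm [ProperSpace E] {φ : ℝ → F} (hφ : HasCompactSupport φ) :
    HasCompactSupport fun x : E ↦ φ ‖x‖ := by
  rw [hasCompactSupport_iff_eventuallyEq, coclosedCompact_eq_cocompact] at hφ ⊢
  exact (tendsto_norm_cocompact_atTop.mono_right atTop_le_cocompact).eventually hφ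

variable [NormedSpace ℝ E] [MeasurableSpace E] [NormedSpace ℝ F] {μ : Measure E} {f : E → F}

/-- The mean of `f` over the sphere of radius `r` centred at the origin, as a function of `r`.
The parametrization of the sphere as `r • ω` makes sense for every `r : ℝ`. -/
def sphericalMean (μ : Measure E) (f : E → F) (r : ℝ) : F :=
  ⨍ ω : sphere (0 : E) 1, f (r • (ω : E)) ∂μ.toSphere

lemma hasCompactSupport_sphericalMean (hfc : HasCompactSupport f) :
    HasCompactSupport (sphericalMean μ f) := by
  obtain ⟨R, hR⟩ := hfc.isCompact.isBounded.subset_closedBall (0 : E)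
  refine .intro (isCompact_closedBall (0 : ℝ) R) fun r hr ↦ ?_
  have hzero (ω : sphere (0 : E) 1) : f (r • (ω : E)) = 0 := by
    refine image_eq_zero_of_notMem_tsupport fun h ↦ hr ?_
    simpa [norm_smul] using hR h
  simp [sphericalMean, hzero]

variable [FiniteDimensional ℝ E] [BorelSpace E] [μ.IsAddHaarMeasure]

lemma hasDerivAt_sphericalMean (hf : ContDiff ℝ 1 f) (r : ℝ) :
    HasDerivAt (sphericalMean μ f)
      (⨍ ω : sphere (0 : E) 1, fderiv ℝ f (r • (ω : E)) ω ∂μ.toSphere) r := by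
  have hf' := hf.continuous_fderiv one_ne_zero
  have hcont := hf.continuous
  obtain ⟨C, hC⟩ := (isCompact_closedBall (0 : E) (|r| + 1)).exists_bound_of_continuousOn
    hf'.continuousOn
  have hbound (ω : sphere (0 : E) 1) (s : ℝ) (hs : s ∈ ball r 1) :
      ‖fderiv ℝ f (s • (ω : E)) ω‖ ≤ C := by
    have hs' : |s| ≤ |r| + 1 := by
      have := abs_sub_abs_le_abs_sub s r
      rw [mem_ball, Real.dist_eq] at hs
      linarith
    simpa using (fderiv ℝ f (s • (ω : E))).le_of_opNorm_le
      (hC (s • (ω : E)) (by simpa [norm_smul] using hs')) ω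
  have hderiv (ω : sphere (0 : E) 1) (s : ℝ) :
      HasDerivAt (fun s : ℝ ↦ f (s • (ω : E))) (fderiv ℝ f (s • (ω : E)) ω) s :=
    (hf.differentiable one_ne_zero _).hasFDerivAt.comp_hasDerivAt s
      (by simpa using (hasDerivAt_id s).smul_const (ω : E))
  unfold sphericalMean
  simp_rw [average_eq]
  refine .const_smul _ (hasDerivAt_integral_of_dominated_loc_of_deriv_le (bound := fun _ ↦ C)
    (ball_mem_nhds r one_pos)
    (.of_forall fun s ↦ (Continuous.aestronglyMeasurable (by fun_prop)))
    (Continuous.integrable_of_hasCompactSupport (by fun_prop) (.of_compactSpace _))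
    (Continuous.aestronglyMeasurable (by fun_prop))
    (.of_forall hbound) (integrable_const C) (.of_forall fun ω s _ ↦ hderiv ω s)).2

lemma deriv_sphericalMean (hf : ContDiff ℝ 1 f) (r : ℝ) :
    deriv (sphericalMean μ f) r = ⨍ ω : sphere (0 : E) 1, fderiv ℝ f (r • (ω : E)) ω ∂μ.toSphere :=
  (hasDerivAt_sphericalMean hf r).deriv

lemma contDiff_sphericalMean (hf : ContDiff ℝ 1 f) : ContDiff ℝ 1 (sphericalMean μ f) := by
  rw [contDiff_one_iff_deriv]
  refine ⟨fun r ↦ (hasDerivAt_sphericalMean hf r).differentiableAt, ?_⟩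
  have := hf.continuous_fderiv one_ne_zero
  simp_rw [funext (deriv_sphericalMean (μ := μ) hf), average_eq]
  refine continuous_const.smul ?_
  simpa using continuous_parametric_integral_of_continuous (μ := μ.toSphere)
    (f := fun r (ω : sphere (0 : E) 1) ↦ fderiv ℝ f (r • (ω : E)) ω) (by fun_prop) isCompact_univ

end SphericalMean

section RadialFunctions

variable {E F : Type*} [NormedAddCommGroup E] [InnerProductSpace ℝ E] [NormedAddCommGroup F]
  [NormedSpace ℝ F]

lemma hasFDerivAt_norm {x : E} (hx : x ≠ 0) :
    HasFDerivAt (fun y : E ↦ ‖y‖) (‖x‖⁻¹ • innerSL ℝ x) x := by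
  have h := (hasStrictFDerivAt_norm_sq x).hasFDerivAt.sqrt (by simpa using hx)
  simp only [Real.sqrt_sq (norm_nonneg _)] at h
  refine h.congr_fderiv ?_
  ext y
  simp only [one_div, mul_inv_rev, smul_apply, coe_innerSL_apply, nsmul_eq_mul,
    Nat.cast_ofNat, smul_eq_mul]
  ring

lemma hasFDerivAt_comp_norm {φ : ℝ → F} {x : E} (hφ : DifferentiableAt ℝ φ ‖x‖) (hx : x ≠ 0) :
    HasFDerivAt (fun y ↦ φ ‖y‖) ((‖x‖⁻¹ • innerSL ℝ x).smulRight (deriv φ ‖x‖)) x := by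
  refine (hφ.hasFDerivAt.comp x (hasFDerivAt_norm hx)).congr_fderiv ?_
  ext y
  simp [smul_smul]

end RadialFunctions

section SphericalFluctuation

variable {E F : Type*} [NormedAddCommGroup E] [NormedAddCommGroup F] [NormedSpace ℝ F]
  [MeasurableSpace E]

/-- The part of `f` with vanishing mean over every sphere centred at the origin: `f` minus its
spherical mean. -/
def sphericalFluctuation [NormedSpace ℝ E] (μ : Measure E) (f : E → F) (x : E) : F :=
  f x - sphericalMean μ f ‖x‖

variable [InnerProductSpace ℝ E] [FiniteDimensional ℝ E] {μ : Measure E} {f : E → F}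

lemma hasCompactSupport_sphericalFluctuation (hfc : HasCompactSupport f) :
    HasCompactSupport (sphericalFluctuation μ f) :=
  hfc.sub (hasCompactSupport_comp_norm (hasCompactSupport_sphericalMean hfc))

variable [BorelSpace E] [μ.IsAddHaarMeasure]

lemma continuous_sphericalFluctuation (hf : ContDiff ℝ 1 f) :
    Continuous (sphericalFluctuation μ f) :=
  hf.continuous.sub ((contDiff_sphericalMean hf).continuous.comp continuous_norm)

lemma fderiv_sphericalFluctuation_apply (hf : ContDiff ℝ 1 f) {x : E} (hx : x ≠ 0) (y : E) :
    fderiv ℝ (sphericalFluctuation μ f) x y =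
      fderiv ℝ f x y - (inner ℝ x y / ‖x‖) • deriv (sphericalMean μ f) ‖x‖ := by
  have h := (hf.differentiable one_ne_zero x).hasFDerivAt.sub
    (hasFDerivAt_comp_norm ((contDiff_sphericalMean (μ := μ) hf).differentiable one_ne_zero _) hx)
  have hfl : fderiv ℝ (sphericalFluctuation μ f) x = _ := h.fderiv
  simp [hfl, div_eq_inv_mul]

lemma memLp_top_deriv_sphericalMean_norm (hf : ContDiff ℝ 1 f) (hfc : HasCompactSupport f) :
    MemLp (fun x ↦ deriv (sphericalMean μ f) ‖x‖) ∞ μ := by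
  have hcont : Continuous fun x : E ↦ deriv (sphericalMean μ f) ‖x‖ :=
    ((contDiff_sphericalMean hf).continuous_deriv le_rfl).comp continuous_norm
  have hsupp : HasCompactSupport fun x : E ↦ deriv (sphericalMean μ f) ‖x‖ :=
    hasCompactSupport_comp_norm (hasCompactSupport_sphericalMean hfc).deriv
  exact hcont.memLp_top_of_hasCompactSupport hsupp μ

variable [Nontrivial E]

lemma memLp_top_fderiv_sphericalFluctuation (hf : ContDiff ℝ 1 f) (hfc : HasCompactSupport f)
    (y : E) : MemLp (fun x ↦ fderiv ℝ (sphericalFluctuation μ f) x y) ∞ μ := by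
  have hfderiv : MemLp (fun x ↦ fderiv ℝ f x y) ∞ μ :=
    ((hf.continuous_fderiv one_ne_zero).clm_apply
      continuous_const).memLp_top_of_hasCompactSupport (hfc.fderiv_apply ℝ y) μ
  have hdir : MemLp (fun x : E ↦ inner ℝ x y / ‖x‖) ∞ μ := by
    simpa [real_inner_comm] using memLp_top_apply_div_norm (μ := μ) (innerSL ℝ y)
  refine (memLp_congr_ae ?_).2
    (hfderiv.sub ((memLp_top_deriv_sphericalMean_norm hf hfc).smul hdir (r := ∞)))
  filter_upwards [Measure.ae_ne μ 0] with x hx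
  exact fderiv_sphericalFluctuation_apply hf hx y

/-- The spherical means of the radial derivative of a fluctuation vanish, being the derivatives of
its spherical means; hence it is orthogonal to the radial functions. -/
lemma integral_comp_norm_smul_fderiv_sphericalFluctuation_self [CompleteSpace F]
    (hf : ContDiff ℝ 1 f) (φ : ℝ → ℝ) :
    ∫ x, φ ‖x‖ • fderiv ℝ (sphericalFluctuation μ f) x x ∂μ = 0 := by
  by_cases hint : Integrable (fun x ↦ φ ‖x‖ • fderiv ℝ (sphericalFluctuation μ f) x x) μ
  swap
  · exact integral_undef hint
  rw [integral_eq_integral_integral_sphere hint]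
  refine integral_eq_zero_of_ae (.of_forall fun ⟨r, hr⟩ ↦ ?_)
  have hr : 0 < r := hr
  have hrad (ω : sphere (0 : E) 1) :
      fderiv ℝ (sphericalFluctuation μ f) (r • (ω : E)) (r • (ω : E)) =
        r • (fderiv ℝ f (r • (ω : E)) ω - deriv (sphericalMean μ f) r) := by
    have hω : r • (ω : E) ≠ 0 := smul_ne_zero hr.ne' (ne_zero_of_mem_unit_sphere ω)
    rw [map_smul, fderiv_sphericalFluctuation_apply hf hω]
    simp [norm_smul, abs_of_pos hr, inner_smul_left, hr.ne']
  simp only [hrad, norm_smul, norm_eq_of_mem_sphere, mul_one, Real.norm_eq_abs, abs_of_pos hr,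
    integral_smul, deriv_sphericalMean hf, integral_sub_average, smul_zero, Pi.zero_apply]

end SphericalFluctuation

section Reflection

lemma integral_comp_norm_mul_coord_mul_coord_of_ne {ι : Type*} [Fintype ι] (φ : ℝ → ℝ)
    {i j : ι} (hij : i ≠ j) : ∫ x : EuclideanSpace ℝ ι, φ ‖x‖ * (x i * x j) = 0 := by
  classical
  let T : EuclideanSpace ℝ ι ≃ₗᵢ[ℝ] EuclideanSpace ℝ ι := .piLpCongrRight 2
    fun k ↦ if k = i then .neg ℝ else .refl ℝ ℝ
  have hTi (x : EuclideanSpace ℝ ι) : T x i = -x i := by simp [T]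
  have hTj (x : EuclideanSpace ℝ ι) : T x j = x j := by simp [T, hij.symm]
  have h := T.measurePreserving.integral_comp T.toHomeomorph.measurableEmbedding
    fun x ↦ φ ‖x‖ * (x i * x j)
  simp only [LinearIsometryEquiv.norm_map, hTi, hTj, neg_mul, mul_neg, integral_neg] at h
  exact neg_eq_self.1 h

end Reflection

open Matrix

section BracketAlgebra

variable {ι : Type*} [Fintype ι]

/-- The coefficient of `r⁻¹` in the polar formula, as a function of `d = D_r ū`, the direction `ω`
and the matrix `A k j = ∂ₖ vⱼ`, which is the transpose of the Jacobian matrix. -/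
def polarBracket (α : ℝ) (d ω : ι → ℝ) (A : Matrix ι ι ℝ) : ℝ :=
  (∑ i, d i ^ 2) +
    α * ((2 * α + 3) / (α + 2)) * (∑ i, d i ^ 2 * ω i ^ 2) +
    (∑ i, ∑ k, A k i ^ 2) +
    α * A.trace ^ 2 +
    (α / (α + 2)) * (∑ k, (A *ᵥ ω) k ^ 2) +
    (α ^ 2 / (α + 2)) * A.trace * (ω ⬝ᵥ A *ᵥ ω) +
    α * ((3 * α + 4) / (α + 2)) * (d ⬝ᵥ ω) * A.trace +
    α * (d ⬝ᵥ ω) * (ω ⬝ᵥ A *ᵥ ω)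

lemma sum_skew_mul (w ω : ι → ℝ) (A : Matrix ι ι ℝ) :
    ∑ j, ∑ k, (w j * A k k - w k * A k j) * ω j = A.trace * (w ⬝ᵥ ω) - w ⬝ᵥ A *ᵥ ω := by
  simp only [sub_mul, Finset.sum_sub_distrib]
  congr 1
  · simp only [trace, diag_apply, dotProduct, Finset.sum_mul_sum]
    rw [Finset.sum_comm]
    congr! 2
    ring
  · simp only [dotProduct, mulVec, Finset.mul_sum, mul_assoc]
    exact Finset.sum_comm

lemma sum_sq_add_vecMulVec {ω : ι → ℝ} (hω : ω ⬝ᵥ ω = 1) (d : ι → ℝ) (A : Matrix ι ι ℝ) :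
    ∑ i, ∑ k, (A + vecMulVec ω d) k i ^ 2 =
      (∑ i, ∑ k, A k i ^ 2) + 2 * (d ⬝ᵥ ω ᵥ* A) + ∑ i, d i ^ 2 := by
  have hcol (i : ι) : ∑ k, (A + vecMulVec ω d) k i ^ 2 =
      ∑ k, A k i ^ 2 + 2 * (d i * (ω ᵥ* A) i) + d i ^ 2 := by
    calc ∑ k, (A + vecMulVec ω d) k i ^ 2
        = ∑ k, (A k i ^ 2 + 2 * (d i * (ω k * A k i)) + d i ^ 2 * (ω k * ω k)) := by
          congr! 1 with k
          rw [Matrix.add_apply, vecMulVec_apply]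
          ring
      _ = ∑ k, A k i ^ 2 + 2 * (d i * (ω ᵥ* A) i) + d i ^ 2 * (ω ⬝ᵥ ω) := by
          simp only [Finset.sum_add_distrib, ← Finset.mul_sum, vecMul, dotProduct]
      _ = _ := by rw [hω, mul_one]
  simp only [hcol, Finset.sum_add_distrib, ← Finset.mul_sum, dotProduct]

lemma sq_sum_eq_sum_sq_add_sum_offDiag (a : ι → ℝ) :
    (∑ i, a i) ^ 2 = ∑ i, a i ^ 2 + ∑ p ∈ Finset.univ.offDiag, a p.1 * a p.2 := by
  classical
  rw [sq, Finset.sum_mul_sum, ← Finset.sum_product', ← Finset.diag_union_offDiag,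
    Finset.sum_union (Finset.disjoint_diag_offDiag _), Finset.sum_diag]
  simp only [sq]

variable [DecidableEq ι]

lemma sum_mul_one_add_smul_vecMulVec (β : ℝ) (ω : ι → ℝ) (S : Matrix ι ι ℝ) :
    ∑ i, ∑ j, S i j * ((if i = j then 1 else 0) + β * (ω i * ω j)) =
      S.trace + β * (ω ⬝ᵥ S *ᵥ ω) := by
  simp only [mul_add, Finset.sum_add_distrib, mul_ite, mul_one, mul_zero, Finset.sum_ite_eq,
    Finset.mem_univ, if_true, dotProduct, mulVec, Finset.mul_sum, trace, diag_apply]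
  congr! 3
  ring

lemma sum_quadratic_mul_kernel (α β : ℝ) (ω : ι → ℝ) (B : Matrix ι ι ℝ) :
    ∑ i, ∑ j, ∑ k, (B k i * B k j + α * B k k * B i j) *
        ((if i = j then 1 else 0) + β * (ω i * ω j)) =
      (∑ i, ∑ k, B k i ^ 2) + α * B.trace ^ 2 + β * (∑ k, (B *ᵥ ω) k ^ 2) +
        α * β * B.trace * (ω ⬝ᵥ B *ᵥ ω) := by
  have hS (i j : ι) : ∑ k, (B k i * B k j + α * B k k * B i j) =
      (Bᵀ * B + (α * B.trace) • B) i j := by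
    simp [mul_apply, trace, Finset.sum_add_distrib, Finset.mul_sum, Finset.sum_mul]
  have hnorm : (Bᵀ * B).trace = ∑ i, ∑ k, B k i ^ 2 := by
    simp [trace, mul_apply, sq]
  have hmulVec : ω ⬝ᵥ (Bᵀ * B) *ᵥ ω = ∑ k, (B *ᵥ ω) k ^ 2 := by
    rw [← mulVec_mulVec, dotProduct_mulVec, vecMul_transpose]
    simp [dotProduct, sq]
  simp only [← Finset.sum_mul, hS, sum_mul_one_add_smul_vecMulVec, trace_add, trace_smul,
    add_mulVec, smul_mulVec, dotProduct_add, dotProduct_smul, hnorm, hmulVec, smul_eq_mul]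
  ring

lemma sum_quadratic_mul_kernel_add_vecMulVec {α : ℝ} (hα : α + 2 ≠ 0) {ω : ι → ℝ}
    (hω : ω ⬝ᵥ ω = 1) (d : ι → ℝ) (A : Matrix ι ι ℝ) {B : Matrix ι ι ℝ}
    (hB : B = A + vecMulVec ω d) :
    ∑ i, ∑ j, ∑ k, (B k i * B k j + α * B k k * B i j) *
        ((if i = j then 1 else 0) + α / (α + 2) * (ω i * ω j)) =
      polarBracket α d ω A + (2 * (d ⬝ᵥ ω ᵥ* A) + α * ((2 * α + 3) / (α + 2)) *
        ∑ p ∈ Finset.univ.offDiag, d p.1 * ω p.1 * (d p.2 * ω p.2)) := by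
  have htr : B.trace = A.trace + d ⬝ᵥ ω := by
    rw [hB, trace_add, trace_vecMulVec, dotProduct_comm]
  have hmul : B *ᵥ ω = A *ᵥ ω + (d ⬝ᵥ ω) • ω := by
    rw [hB, add_mulVec, vecMulVec_mulVec]
    simp
  have hquad : ω ⬝ᵥ B *ᵥ ω = ω ⬝ᵥ A *ᵥ ω + d ⬝ᵥ ω := by
    rw [hmul, dotProduct_add, dotProduct_smul, hω, smul_eq_mul, mul_one]
  have hnorm : ∑ k, (B *ᵥ ω) k ^ 2 =
      (∑ k, (A *ᵥ ω) k ^ 2) + 2 * (d ⬝ᵥ ω) * (ω ⬝ᵥ A *ᵥ ω) + (d ⬝ᵥ ω) ^ 2 := by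
    have hsq (w : ι → ℝ) : ∑ k, w k ^ 2 = w ⬝ᵥ w := by simp only [dotProduct, sq]
    simp only [hsq, hmul, add_dotProduct, dotProduct_add, smul_dotProduct,
      dotProduct_smul, hω, dotProduct_comm (A *ᵥ ω) ω, smul_eq_mul]
    ring
  have hoff : (d ⬝ᵥ ω) ^ 2 = ∑ i, d i ^ 2 * ω i ^ 2 +
      ∑ p ∈ Finset.univ.offDiag, d p.1 * ω p.1 * (d p.2 * ω p.2) := by
    simpa [dotProduct, mul_pow] using sq_sum_eq_sum_sq_add_sum_offDiag fun i ↦ d i * ω i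
  rw [sum_quadratic_mul_kernel, htr, hquad, hnorm, hB, sum_sq_add_vecMulVec hω, polarBracket,
    ← sub_eq_of_eq_add hoff]
  field_simp
  ring

end BracketAlgebra

section Coordinates

variable {x : E3}

/-- The direction `ω = x / |x|`, as a family of coordinates. -/
def dir (x : E3) (i : Fin 3) : ℝ := x i / ‖x‖

/-- The matrix with entries `jac v x k j = ∂ₖ vⱼ (x)`, which is the transpose of the usual Jacobian
matrix; in this convention `((∂ₖ v) · ω)ₖ` is `jac v x *ᵥ ω`. -/
def jac (v : E3 → Fin 3 → ℝ) (x : E3) : Matrix (Fin 3) (Fin 3) ℝ :=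
  .of fun k j ↦ pd k (fun z ↦ v z j) x

lemma sum_mul_pd (f : E3 → ℝ) (x y : E3) : ∑ k, y k * pd k f x = fderiv ℝ f x y := by
  conv_rhs => rw [← (EuclideanSpace.basisFun (Fin 3) ℝ).sum_repr y]
  simp [pd]

lemma dir_dotProduct_dir (hx : x ≠ 0) : dir x ⬝ᵥ dir x = 1 := by
  have hnorm : ∑ i, x i * x i = ‖x‖ ^ 2 := by
    simp [EuclideanSpace.norm_sq_eq, ← sq]
  simp_rw [dotProduct, dir, div_mul_div_comm, ← Finset.sum_div, hnorm, ← sq]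
  exact div_self (pow_ne_zero 2 (norm_ne_zero_iff.2 hx))

lemma dir_vecMul_jac (v : E3 → Fin 3 → ℝ) (x : E3) (i : Fin 3) :
    (dir x ᵥ* jac v x) i = ‖x‖⁻¹ * fderiv ℝ (fun z ↦ v z i) x x := by
  rw [← sum_mul_pd, Finset.mul_sum]
  simp only [vecMul, dotProduct, dir, jac, of_apply, div_eq_inv_mul, mul_assoc]

lemma memLp_top_dir (i : Fin 3) : MemLp (fun x ↦ dir x i) ∞ :=
  memLp_top_apply_div_norm (EuclideanSpace.proj i : E3 →L[ℝ] ℝ)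

lemma integral_comp_norm_mul_dir_mul_dir_of_ne (φ : ℝ → ℝ) {i j : Fin 3} (hij : i ≠ j) :
    ∫ x, φ ‖x‖ * (dir x i * dir x j) = 0 := by
  have h := integral_comp_norm_mul_coord_mul_coord_of_ne (fun r ↦ φ r * (r * r)⁻¹) hij
  simpa only [dir, div_mul_div_comm, div_eq_inv_mul (_ * _), mul_assoc (φ _)] using h

lemma Phi_eq_dir (α : ℝ) (x : E3) (i j : Fin 3) : Phi α x i j =
    cA α * ‖x‖⁻¹ * ((if i = j then 1 else 0) + α / (α + 2) * (dir x i * dir x j)) := by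
  simp only [Phi, dir]
  ring

lemma pd_Phi (α : ℝ) (hx : x ≠ 0) (i j : Fin 3) :
    pd i (fun z ↦ Phi α z i j) x = cA α * (‖x‖ ^ 2)⁻¹ *
      ((α / (α + 2) - 1) * (if i = j then dir x i else 0) +
        α / (α + 2) * (dir x j - 3 * (dir x i * dir x i) * dir x j)) := by
  have hr : ‖x‖ ≠ 0 := norm_ne_zero_iff.2 hx
  have hΦ : (fun z ↦ Phi α z i j) = fun z ↦ cA α * ((if i = j then 1 else 0) * ‖z‖⁻¹ +
      α / (α + 2) * (z i * z j * (‖z‖ ^ 3)⁻¹)) := by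
    funext z
    rw [Phi]
    ring
  have hinv := hasFDerivAt_comp_norm (φ := fun r ↦ r⁻¹) (by fun_prop (disch := exact hr)) hx
  have hinv3 := hasFDerivAt_comp_norm (φ := fun r ↦ (r ^ 3)⁻¹)
    (by fun_prop (disch := exact pow_ne_zero 3 hr)) hx
  have hcoord (k : Fin 3) :
      HasFDerivAt (fun z : E3 ↦ z k) (EuclideanSpace.proj k : E3 →L[ℝ] ℝ) x :=
    (EuclideanSpace.proj k : E3 →L[ℝ] ℝ).hasFDerivAt
  have h := ((hinv.const_mul (if i = j then 1 else 0)).add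
    ((((hcoord i).mul (hcoord j)).mul hinv3).const_mul (α / (α + 2)))).const_mul (cA α)
  have hfderiv : fderiv ℝ (fun z ↦ Phi α z i j) x = _ := hΦ ▸ h.fderiv
  have hcube : deriv (fun r : ℝ ↦ (r ^ 3)⁻¹) ‖x‖ = -3 * (‖x‖ ^ 4)⁻¹ := by
    have h3 : HasDerivAt (fun r : ℝ ↦ (r ^ 3)⁻¹) _ ‖x‖ :=
      (hasDerivAt_pow 3 ‖x‖).fun_inv (pow_ne_zero 3 hr)
    rw [h3.deriv]
    push_cast
    field
  rw [pd, hfderiv]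
  simp only [_root_.smul_apply, _root_.add_apply, ContinuousLinearMap.smulRight_apply,
    coe_innerSL_apply, EuclideanSpace.inner_single_right, ringHom_apply, Pi.mul_apply,
    PiLp.proj_apply, PiLp.single_apply, eq_comm (a := j), smul_eq_mul, deriv_inv', hcube, if_true,
    dir]
  split_ifs <;> field

lemma sum_pd_Phi (α : ℝ) (hx : x ≠ 0) (j : Fin 3) :
    ∑ i, pd i (fun z ↦ Phi α z i j) x =
      cA α * (‖x‖ ^ 2)⁻¹ * ((α / (α + 2) - 1) * dir x j) := by
  have hsq : ∑ i, dir x i * dir x i = 1 := dir_dotProduct_dir hx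
  simp only [pd_Phi α hx, ← Finset.mul_sum, ← Finset.sum_mul, Finset.sum_add_distrib,
    Finset.sum_sub_distrib, hsq]
  simp

lemma sum_skew_mul_pd_Phi {α : ℝ} (hα : α + 2 ≠ 0) (hx : x ≠ 0) (w : Fin 3 → ℝ)
    (A : Matrix (Fin 3) (Fin 3) ℝ) :
    α / 2 * ∑ i, ∑ j, ∑ k, (w j * A k k - w k * A k j) * pd i (fun z ↦ Phi α z i j) x =
      cA α * (α / (α + 2) * (‖x‖ ^ 2)⁻¹ *
        (w ⬝ᵥ A *ᵥ dir x - A.trace * (w ⬝ᵥ dir x))) := by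
  have hdiv : ∑ i, ∑ j, ∑ k, (w j * A k k - w k * A k j) * pd i (fun z ↦ Phi α z i j) x =
      cA α * (‖x‖ ^ 2)⁻¹ * (α / (α + 2) - 1) *
        ∑ j, ∑ k, (w j * A k k - w k * A k j) * dir x j := by
    rw [Finset.sum_comm, Finset.mul_sum]
    congr! 1 with j
    rw [Finset.sum_comm, Finset.mul_sum]
    congr! 1 with k
    rw [← Finset.mul_sum, sum_pd_Phi α hx]
    ring
  rw [hdiv, sum_skew_mul]
  field

lemma mul_integral_sum_skew_mul_pd_Phi {α : ℝ} (hα : α + 2 ≠ 0) (v : E3 → Fin 3 → ℝ) :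
    α / 2 * ∫ x, ∑ i, ∑ j, ∑ k, (v x j * jac v x k k - v x k * jac v x k j) *
        pd i (fun z ↦ Phi α z i j) x =
      cA α * ∫ x, α / (α + 2) * (‖x‖ ^ 2)⁻¹ *
        (v x ⬝ᵥ jac v x *ᵥ dir x - (jac v x).trace * (v x ⬝ᵥ dir x)) := by
  rw [← integral_const_mul, ← integral_const_mul]
  refine integral_congr_ae ?_
  filter_upwards [Measure.ae_ne volume 0] with x hx
  exact sum_skew_mul_pd_Phi hα hx (v x) (jac v x)

lemma sum_mul_Phi (α : ℝ) (x : E3) (c : Fin 3 → Fin 3 → Fin 3 → ℝ) :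
    ∑ i, ∑ j, ∑ k, c i j k * Phi α x i j = cA α * (‖x‖⁻¹ * ∑ i, ∑ j, ∑ k, c i j k *
      ((if i = j then 1 else 0) + α / (α + 2) * (dir x i * dir x j))) := by
  simp only [Phi_eq_dir, Finset.mul_sum, mul_assoc, mul_left_comm (c _ _ _)]

lemma hasCompactSupport_apply {u : E3 → Fin 3 → ℝ} (hc : HasCompactSupport u) (i : Fin 3) :
    HasCompactSupport fun x ↦ u x i :=
  hc.comp_left (g := fun w : Fin 3 → ℝ ↦ w i) rfl

lemma integrable_inv_norm_mul {f : E3 → ℝ} (hf : MemLp f ∞) (hfc : HasCompactSupport f) :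
    Integrable fun x ↦ ‖x‖⁻¹ * f x := by
  simpa using integrable_inv_norm_pow_mul (n := 1) (by simp) hf hfc

lemma integrable_inv_norm_mul_sum_quadratic_mul_kernel {u : E3 → Fin 3 → ℝ} (hu : ContDiff ℝ 1 u)
    (hc : HasCompactSupport u) (α β : ℝ) :
    Integrable fun x ↦ ‖x‖⁻¹ * ∑ i, ∑ j, ∑ k,
      (jac u x k i * jac u x k j + α * jac u x k k * jac u x i j) *
        ((if i = j then 1 else 0) + β * (dir x i * dir x j)) := by
  have hcont (k i : Fin 3) : Continuous fun x ↦ jac u x k i :=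
    ((contDiff_pi.1 hu i).continuous_fderiv one_ne_zero).clm_apply continuous_const
  have hsupp (k i : Fin 3) : HasCompactSupport fun x ↦ jac u x k i :=
    (hasCompactSupport_apply hc i).fderiv_apply ℝ (EuclideanSpace.single k 1)
  have hcoeff_supp (i j k : Fin 3) : HasCompactSupport fun x ↦
      jac u x k i * jac u x k j + α * jac u x k k * jac u x i j :=
    (hsupp k i).mul_right.add (hsupp i j).mul_left
  have hcoeff (i j k : Fin 3) : MemLp (fun x ↦
      jac u x k i * jac u x k j + α * jac u x k k * jac u x i j) ∞ :=
    have h : Continuous fun x ↦ jac u x k i * jac u x k j + α * jac u x k k * jac u x i j := by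
      fun_prop
    h.memLp_top_of_hasCompactSupport (hcoeff_supp i j k) _
  have hdir (i j : Fin 3) : MemLp (fun x ↦ dir x i * dir x j) ∞ :=
    (memLp_top_dir j).mul' (memLp_top_dir i)
  have hkernel (i j : Fin 3) : MemLp (fun x ↦
      (if i = j then 1 else 0) + β * (dir x i * dir x j)) ∞ :=
    (memLp_top_const (if i = j then (1 : ℝ) else 0)).add ((hdir i j).const_mul β)
  simp only [Finset.mul_sum]
  refine integrable_finsetSum _ fun i _ ↦ integrable_finsetSum _ fun j _ ↦
    integrable_finsetSum _ fun k _ ↦ ?_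
  exact integrable_inv_norm_mul ((hkernel i j).mul' (hcoeff i j k)) (hcoeff_supp i j k).mul_right

end Coordinates

namespace IsSphericalMeanDecomp

variable {u v : E3 → Fin 3 → ℝ} {ub : Fin 3 → ℝ → ℝ} {x : E3}

lemma mean_eq (hdec : IsSphericalMeanDecomp u ub v) (i : Fin 3) :
    ub i = sphericalMean volume fun x ↦ u x i := by
  have harea : (volume : Measure E3).toSphere.real Set.univ = 4 * π := by
    rw [Measure.toSphere_real_apply_univ, Measure.real, EuclideanSpace.volume_ball_fin_three,
      ENNReal.toReal_mul, ENNReal.toReal_ofReal (by positivity : 0 ≤ π * 4 / 3)]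
    simp only [finrank_euclideanSpace, Fintype.card_fin, Nat.cast_ofNat, ENNReal.ofReal_one,
      one_pow, ENNReal.toReal_one, one_mul]
    ring
  funext r
  rw [hdec.1 i r, sphericalMean, average_eq, harea, one_div]
  rfl

lemma fluctuation_eq (hdec : IsSphericalMeanDecomp u ub v) (i : Fin 3) :
    (fun x ↦ v x i) = sphericalFluctuation volume fun x ↦ u x i := by
  funext x
  rw [sphericalFluctuation, ← hdec.mean_eq i]
  exact eq_sub_of_add_eq' (hdec.2 x i).symm

variable (hdec : IsSphericalMeanDecomp u ub v)
include hdec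

lemma hasCompactSupport_fluctuation (hc : HasCompactSupport u) (i : Fin 3) :
    HasCompactSupport fun x ↦ v x i := by
  rw [hdec.fluctuation_eq i]
  exact hasCompactSupport_sphericalFluctuation (hasCompactSupport_apply hc i)

lemma hasCompactSupport_deriv_mean (hc : HasCompactSupport u) (i : Fin 3) :
    HasCompactSupport fun x : E3 ↦ deriv (ub i) ‖x‖ := by
  rw [hdec.mean_eq i]
  exact hasCompactSupport_comp_norm
    (hasCompactSupport_sphericalMean (hasCompactSupport_apply hc i)).deriv

variable (hu : ContDiff ℝ 1 u)
include hu

lemma jac_eq (hx : x ≠ 0) :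
    jac u x = jac v x + vecMulVec (dir x) fun i ↦ deriv (ub i) ‖x‖ := by
  ext k i
  have h := fderiv_sphericalFluctuation_apply (μ := volume) (contDiff_pi.1 hu i) hx
    (EuclideanSpace.single k 1)
  rw [← hdec.fluctuation_eq, ← hdec.mean_eq] at h
  simpa [jac, pd, dir, vecMulVec_apply, EuclideanSpace.inner_single_right] using
    (eq_sub_iff_add_eq.1 h).symm

lemma integral_comp_norm_mul_dir_vecMul_jac (φ : ℝ → ℝ) (i : Fin 3) :
    ∫ x, φ ‖x‖ * (dir x ᵥ* jac v x) i = 0 := by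
  have h := integral_comp_norm_smul_fderiv_sphericalFluctuation_self (μ := volume)
    (contDiff_pi.1 hu i) fun r ↦ φ r * r⁻¹
  simpa only [dir_vecMul_jac, hdec.fluctuation_eq, mul_assoc, smul_eq_mul] using h

variable (hc : HasCompactSupport u)
include hc

lemma memLp_top_fluctuation (i : Fin 3) : MemLp (fun x ↦ v x i) ∞ := by
  have hcont : Continuous fun x ↦ v x i := by
    rw [hdec.fluctuation_eq i]
    exact continuous_sphericalFluctuation (contDiff_pi.1 hu i)
  exact hcont.memLp_top_of_hasCompactSupport (hdec.hasCompactSupport_fluctuation hc i) _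

lemma memLp_top_jac (k i : Fin 3) : MemLp (fun x ↦ jac v x k i) ∞ := by
  simp only [jac, of_apply, pd, hdec.fluctuation_eq i]
  exact memLp_top_fderiv_sphericalFluctuation (contDiff_pi.1 hu i) (hasCompactSupport_apply hc i) _

lemma memLp_top_dir_mul_jac (l k i : Fin 3) : MemLp (fun x ↦ dir x l * jac v x k i) ∞ :=
  (hdec.memLp_top_jac hu hc k i).mul' (memLp_top_dir l)

lemma memLp_top_deriv_mean (i : Fin 3) : MemLp (fun x : E3 ↦ deriv (ub i) ‖x‖) ∞ := by
  rw [hdec.mean_eq i]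
  exact memLp_top_deriv_sphericalMean_norm (contDiff_pi.1 hu i) (hasCompactSupport_apply hc i)

lemma integrable_inv_norm_sq_mul :
    Integrable fun x ↦ (‖x‖ ^ 2)⁻¹ *
      (v x ⬝ᵥ jac v x *ᵥ dir x - (jac v x).trace * (v x ⬝ᵥ dir x)) := by
  have hterm (i j k l : Fin 3) :
      Integrable fun x ↦ (‖x‖ ^ 2)⁻¹ * (v x i * (dir x l * jac v x j k)) :=
    integrable_inv_norm_pow_mul (by simp)
      ((hdec.memLp_top_dir_mul_jac hu hc l j k).mul' (hdec.memLp_top_fluctuation hu hc i))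
      (hdec.hasCompactSupport_fluctuation hc i).mul_right
  have hsum (x : E3) : (‖x‖ ^ 2)⁻¹ *
      (v x ⬝ᵥ jac v x *ᵥ dir x - (jac v x).trace * (v x ⬝ᵥ dir x)) =
      ∑ j, ∑ k, ((‖x‖ ^ 2)⁻¹ * (v x k * (dir x j * jac v x k j)) -
        (‖x‖ ^ 2)⁻¹ * (v x j * (dir x j * jac v x k k))) := by
    rw [← neg_sub, ← sum_skew_mul, mul_neg, ← neg_mul]
    simp only [Finset.mul_sum]
    congr! 2
    ring
  simp only [hsum]
  exact integrable_finsetSum _ fun j _ ↦ integrable_finsetSum _ fun k _ ↦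
    (hterm _ _ _ _).sub (hterm _ _ _ _)

lemma integrable_inv_norm_mul_deriv_mean_mul_dir_vecMul_jac (i : Fin 3) :
    Integrable fun x ↦ ‖x‖⁻¹ * (deriv (ub i) ‖x‖ * (dir x ᵥ* jac v x) i) := by
  simp only [vecMul, dotProduct]
  exact integrable_inv_norm_mul
    ((memLp_finsetSum _ fun k _ ↦ hdec.memLp_top_dir_mul_jac hu hc k k i).mul'
      (hdec.memLp_top_deriv_mean hu hc i))
    (hdec.hasCompactSupport_deriv_mean hc i).mul_right

lemma integrable_inv_norm_mul_dotProduct_dir_vecMul_jac :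
    Integrable fun x ↦ ‖x‖⁻¹ * ((fun i ↦ deriv (ub i) ‖x‖) ⬝ᵥ dir x ᵥ* jac v x) := by
  simp only [dotProduct, Finset.mul_sum]
  exact integrable_finsetSum _ fun i _ ↦
    hdec.integrable_inv_norm_mul_deriv_mean_mul_dir_vecMul_jac hu hc i

lemma integral_inv_norm_mul_dotProduct_dir_vecMul_jac :
    ∫ x, ‖x‖⁻¹ * ((fun i ↦ deriv (ub i) ‖x‖) ⬝ᵥ dir x ᵥ* jac v x) = 0 := by
  simp only [dotProduct, Finset.mul_sum]
  rw [integral_finsetSum _ fun i _ ↦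
    hdec.integrable_inv_norm_mul_deriv_mean_mul_dir_vecMul_jac hu hc i]
  refine Finset.sum_eq_zero fun i _ ↦ ?_
  simpa only [mul_assoc] using
    hdec.integral_comp_norm_mul_dir_vecMul_jac hu (fun r ↦ r⁻¹ * deriv (ub i) r) i

lemma integrable_inv_norm_mul_deriv_mean_mul_deriv_mean (i j : Fin 3) :
    Integrable fun x ↦ ‖x‖⁻¹ *
      (deriv (ub i) ‖x‖ * dir x i * (deriv (ub j) ‖x‖ * dir x j)) := by
  have hmem (i : Fin 3) : MemLp (fun x ↦ deriv (ub i) ‖x‖ * dir x i) ∞ :=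
    (memLp_top_dir i).mul' (hdec.memLp_top_deriv_mean hu hc i)
  exact integrable_inv_norm_mul ((hmem j).mul' (hmem i))
    (hdec.hasCompactSupport_deriv_mean hc i).mul_right.mul_right

lemma integrable_inv_norm_mul_sum_offDiag :
    Integrable fun x ↦ ‖x‖⁻¹ * ∑ p ∈ Finset.univ.offDiag,
      deriv (ub p.1) ‖x‖ * dir x p.1 * (deriv (ub p.2) ‖x‖ * dir x p.2) := by
  simp only [Finset.mul_sum]
  exact integrable_finsetSum _ fun p _ ↦
    hdec.integrable_inv_norm_mul_deriv_mean_mul_deriv_mean hu hc p.1 p.2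

lemma integral_inv_norm_mul_sum_offDiag :
    ∫ x, ‖x‖⁻¹ * ∑ p ∈ Finset.univ.offDiag,
      deriv (ub p.1) ‖x‖ * dir x p.1 * (deriv (ub p.2) ‖x‖ * dir x p.2) = 0 := by
  simp only [Finset.mul_sum]
  rw [integral_finsetSum _ fun p _ ↦
    hdec.integrable_inv_norm_mul_deriv_mean_mul_deriv_mean hu hc p.1 p.2]
  refine Finset.sum_eq_zero fun p hp ↦ ?_
  have h := integral_comp_norm_mul_dir_mul_dir_of_ne
    (fun r ↦ r⁻¹ * (deriv (ub p.1) r * deriv (ub p.2) r)) (Finset.mem_offDiag.1 hp).2.2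
  simpa only [mul_assoc, mul_left_comm (dir _ _)] using h

/-- Integration removes the two quantities absent from `polarBracket`: the coupling of `D_r ū` with
the radial derivative of `v`, and the products of distinct components of `D_r ū`. -/
lemma integrable_and_integral_inv_norm_mul_polarBracket {α : ℝ} (hα : α + 2 ≠ 0) :
    Integrable (fun x ↦ ‖x‖⁻¹ *
      polarBracket α (fun i ↦ deriv (ub i) ‖x‖) (dir x) (jac v x)) ∧
    ∫ x, ‖x‖⁻¹ * polarBracket α (fun i ↦ deriv (ub i) ‖x‖) (dir x) (jac v x) =
      ∫ x, ‖x‖⁻¹ * ∑ i, ∑ j, ∑ k,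
        (jac u x k i * jac u x k j + α * jac u x k k * jac u x i j) *
          ((if i = j then 1 else 0) + α / (α + 2) * (dir x i * dir x j)) := by
  let Q (x : E3) : ℝ := ‖x‖⁻¹ * ∑ i, ∑ j, ∑ k,
    (jac u x k i * jac u x k j + α * jac u x k k * jac u x i j) *
      ((if i = j then 1 else 0) + α / (α + 2) * (dir x i * dir x j))
  let C (x : E3) : ℝ := ‖x‖⁻¹ * ((fun i ↦ deriv (ub i) ‖x‖) ⬝ᵥ dir x ᵥ* jac v x)
  let D (x : E3) : ℝ := ‖x‖⁻¹ * ∑ p ∈ Finset.univ.offDiag,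
    deriv (ub p.1) ‖x‖ * dir x p.1 * (deriv (ub p.2) ‖x‖ * dir x p.2)
  have hQ : Integrable Q := integrable_inv_norm_mul_sum_quadratic_mul_kernel hu hc α _
  have hC : Integrable fun x ↦ 2 * C x :=
    (hdec.integrable_inv_norm_mul_dotProduct_dir_vecMul_jac hu hc).const_mul 2
  have hD : Integrable fun x ↦ α * ((2 * α + 3) / (α + 2)) * D x :=
    (hdec.integrable_inv_norm_mul_sum_offDiag hu hc).const_mul _
  have hbracket : (fun x ↦ ‖x‖⁻¹ *
      polarBracket α (fun i ↦ deriv (ub i) ‖x‖) (dir x) (jac v x)) =ᵐ[volume]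
      fun x ↦ Q x - (2 * C x + α * ((2 * α + 3) / (α + 2)) * D x) := by
    filter_upwards [Measure.ae_ne volume 0] with x hx
    simp only [Q, C, D, sum_quadratic_mul_kernel_add_vecMulVec hα (dir_dotProduct_dir hx) _ _
      (hdec.jac_eq hu hx)]
    ring
  have hCD : Integrable fun x ↦ 2 * C x + α * ((2 * α + 3) / (α + 2)) * D x := hC.add hD
  have hCD_zero : ∫ x, (2 * C x + α * ((2 * α + 3) / (α + 2)) * D x) = 0 := by
    rw [integral_add hC hD, integral_const_mul, integral_const_mul,
      hdec.integral_inv_norm_mul_dotProduct_dir_vecMul_jac hu hc,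
      hdec.integral_inv_norm_mul_sum_offDiag hu hc, mul_zero, mul_zero, add_zero]
  refine ⟨(hQ.sub hCD).congr hbracket.symm, ?_⟩
  rw [integral_congr_ae hbracket, integral_sub hQ hCD, hCD_zero, sub_zero]

end IsSphericalMeanDecomp

theorem lame_bilinear_form_polar_formula_general {α : ℝ} (hα : (α + 1) * (α + 2) ≠ 0)
    {u v : E3 → Fin 3 → ℝ} {ub : Fin 3 → ℝ → ℝ} (hdec : IsSphericalMeanDecomp u ub v)
    (hu : ContDiff ℝ 1 u) (hc : HasCompactSupport u) :
    α / 2 * (∫ x, ∑ i, ∑ j, ∑ k, (v x j * jac v x k k - v x k * jac v x k j) *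
        pd i (fun z ↦ Phi α z i j) x) +
      (∫ x, ∑ i, ∑ j, ∑ k, (jac u x k i * jac u x k j + α * jac u x k k * jac u x i j) *
        Phi α x i j) =
      cA α * ∫ x, (α / (α + 2) * (‖x‖ ^ 2)⁻¹ *
          (v x ⬝ᵥ jac v x *ᵥ dir x - (jac v x).trace * (v x ⬝ᵥ dir x)) +
        ‖x‖⁻¹ * polarBracket α (fun i ↦ deriv (ub i) ‖x‖) (dir x) (jac v x)) := by
  have hα2 : α + 2 ≠ 0 := right_ne_zero_of_mul hα
  have hfirst : Integrable fun x ↦ α / (α + 2) * (‖x‖ ^ 2)⁻¹ *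
      (v x ⬝ᵥ jac v x *ᵥ dir x - (jac v x).trace * (v x ⬝ᵥ dir x)) := by
    simpa only [mul_assoc] using (hdec.integrable_inv_norm_sq_mul hu hc).const_mul (α / (α + 2))
  obtain ⟨hsecond, hquad⟩ := hdec.integrable_and_integral_inv_norm_mul_polarBracket hu hc hα2
  simp only [sum_mul_Phi]
  rw [mul_integral_sum_skew_mul_pd_Phi hα2, integral_const_mul, ← hquad,
    integral_add hfirst hsecond, mul_add]

/-- Explicit formula for the bilinear form `B*(u,u)` in polar-type quantities,
where `r = |x|`, `ωᵢ = xᵢ/|x|`, `D_r ūᵢ = (ūᵢ)'(r)`. -/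
theorem lame_bilinear_form_polar_formula
    (α : ℝ) (hα : -1 < α)
    (u : E3 → Fin 3 → ℝ) (hu : IsTestOn Set.univ u)
    (ub : Fin 3 → ℝ → ℝ) (v : E3 → Fin 3 → ℝ)
    (hdec : IsSphericalMeanDecomp u ub v) :
    ((α / 2) * ∫ x : E3, ∑ i, ∑ j, ∑ k,
        (v x j * pd k (fun z => v z k) x - v x k * pd k (fun z => v z j) x) *
          pd i (fun z => Phi α z i j) x) +
    (∫ x : E3, ∑ i, ∑ j, ∑ k,
        (pd k (fun z => u z i) x * pd k (fun z => u z j) x +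
          α * pd k (fun z => u z k) x * pd i (fun z => u z j) x) * Phi α x i j) =
    cA α * ∫ x : E3,
      ((α / (α + 2)) * (‖x‖ ^ 2)⁻¹ *
        ((∑ k, v x k * ∑ j, pd k (fun z => v z j) x * (x j / ‖x‖)) -
          divg v x * ∑ j, v x j * (x j / ‖x‖)) +
      ‖x‖⁻¹ *
        ((∑ i, (deriv (ub i) ‖x‖) ^ 2) +
          α * ((2 * α + 3) / (α + 2)) * (∑ i, (deriv (ub i) ‖x‖) ^ 2 * (x i / ‖x‖) ^ 2) +
          (∑ i, ∑ k, (pd k (fun z => v z i) x) ^ 2) +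
          α * (divg v x) ^ 2 +
          (α / (α + 2)) * (∑ k, (∑ j, pd k (fun z => v z j) x * (x j / ‖x‖)) ^ 2) +
          (α ^ 2 / (α + 2)) * divg v x *
            (∑ i, (x i / ‖x‖) * ∑ j, pd i (fun z => v z j) x * (x j / ‖x‖)) +
          α * ((3 * α + 4) / (α + 2)) * (∑ i, deriv (ub i) ‖x‖ * (x i / ‖x‖)) * divg v x +
          α * (∑ i, deriv (ub i) ‖x‖ * (x i / ‖x‖)) *
            (∑ i, (x i / ‖x‖) * ∑ j, pd i (fun z => v z j) x * (x j / ‖x‖)))) := 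
  lame_bilinear_form_polar_formula_general
    (mul_pos (by linarith) (by linarith)).ne' hdec (hu.1.of_le (by exact_mod_cast le_top)) hu.2.1
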